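/- Let A be an n×n complex matrix with Ind(A) = k and rank(A^k) = rank((A^k)~ A^k), let A = Â₁ + Â₂ be its m-core-EP decomposition, and let M be the m-core inverse of A^k. Then Â₁ = A^k M A and Â₂ = A − A^k M A. -/

import Mathlib

/-!
The matrix `P = A^k * M` is `madj`-self-adjoint and fixes the range of `A^k`. The claim follows
from `P * A₁ = A₁` and `P * A₂ = 0`.

* Since `A₂ * A₁ = 0`, one has `A^k * A₁ = A₁^(k+1)`, and since `A₁` and `A₁ ^ 2` have equal rank,
  `A₁ = A₁^(k+1) * Z` for some `Z` (`add_pow_mul_left`, `exists_eq_pow_mul`). Hence the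
  range of `A₁` lies in that of `A^k`, and `P` fixes `A₁`.
* Since `A₂ * A₁ = 0` and `A₂^k = 0`, the power `A^k` equals `A₁ * W` for some `W`
  (`exists_pow_eq_add`). Hence `P = madj P` has `madj A₁` as its rightmost factor, which
  annihilates `A₂`.
-/

open Matrix

noncomputable section

/-- The Minkowski metric matrix `G = diag(1, -1, …, -1)`. -/
def mink (n : ℕ) : Matrix (Fin n) (Fin n) ℂ :=
  Matrix.diagonal (fun i => if (i : ℕ) = 0 then 1 else -1)

/-- The Minkowski adjoint `A~ = G A* G`. -/
def madj {n : ℕ} (A : Matrix (Fin n) (Fin n) ℂ) : Matrix (Fin n) (Fin n) ℂ :=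
  mink n * Aᴴ * mink n

/-- `k` is the index of `A`: the smallest positive integer with
`rank (A^(k+1)) = rank (A^k)`. -/
def IsInd {n : ℕ} (A : Matrix (Fin n) (Fin n) ℂ) (k : ℕ) : Prop :=
  0 < k ∧ (A ^ (k + 1)).rank = (A ^ k).rank ∧
    ∀ j, 0 < j → (A ^ (j + 1)).rank = (A ^ j).rank → k ≤ j

/-- `X` is an m-core-EP inverse of `A` (with `Ind(A) = k`). -/
def IsMCoreEP {n : ℕ} (A X : Matrix (Fin n) (Fin n) ℂ) (k : ℕ) : Prop :=
  X * A * X = X ∧ X * A ^ (k + 1) = A ^ k ∧ madj (A * X) = A * X ∧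
    ∃ Z : Matrix (Fin n) (Fin n) ℂ, X = A ^ k * Z

/-- `Y` is an m-core inverse of `B`. -/
def IsMCore {n : ℕ} (B Y : Matrix (Fin n) (Fin n) ℂ) : Prop :=
  B * Y * B = B ∧ B * Y ^ 2 = Y ∧ madj (B * Y) = B * Y

/-- `A = A₁ + A₂` is an m-core-EP decomposition of `A` (with `Ind(A) = k`). -/
def IsMCoreEPDecomp {n : ℕ} (A A₁ A₂ : Matrix (Fin n) (Fin n) ℂ) (k : ℕ) : Prop :=
  A = A₁ + A₂ ∧ (A₁ ^ 2).rank = A₁.rank ∧ (madj A₁ * A₁).rank = A₁.rank ∧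
    A₂ ^ k = 0 ∧ madj A₁ * A₂ = 0 ∧ A₂ * A₁ = 0

theorem mink_mul_mink (n : ℕ) : mink n * mink n = 1 := by
  rw [mink, Matrix.diagonal_mul_diagonal, ← Matrix.diagonal_one]
  congr 1
  funext i
  split_ifs <;> norm_num

theorem madj_mul {n : ℕ} (X Y : Matrix (Fin n) (Fin n) ℂ) :
    madj (X * Y) = madj Y * madj X := by
  have h : madj Y * madj X = mink n * Yᴴ * (mink n * mink n) * Xᴴ * mink n := by
    simp only [madj, mul_assoc]
  rw [h, mink_mul_mink, madj, conjTranspose_mul]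
  simp only [mul_assoc, mul_one]

/-- Equal ranks force `B` and `B ^ 2` to have the same range. -/
theorem exists_eq_sq_mul {n : ℕ} {B : Matrix (Fin n) (Fin n) ℂ}
    (h : (B ^ 2).rank = B.rank) : ∃ Z, B = B ^ 2 * Z := by
  have hle : LinearMap.range (B ^ 2).mulVecLin ≤ LinearMap.range B.mulVecLin := by
    rw [pow_two, Matrix.mulVecLin_mul]
    exact LinearMap.range_comp_le_range _ _
  have heq := Submodule.eq_of_le_of_finrank_eq hle h
  have hcol : ∀ j, ∃ z, (B ^ 2) *ᵥ z = B.col j := by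
    intro j
    have : B.col j ∈ LinearMap.range (B ^ 2).mulVecLin := by
      rw [heq]
      exact ⟨Pi.single j 1, by simp⟩
    exact this
  choose z hz using hcol
  refine ⟨Matrix.of fun i j => z j i, ?_⟩
  ext i j
  exact (congrFun (hz j) i).symm

theorem exists_eq_pow_mul {n : ℕ} {B : Matrix (Fin n) (Fin n) ℂ}
    (h : (B ^ 2).rank = B.rank) (m : ℕ) : ∃ Z, B = B ^ (m + 1) * Z := by
  obtain ⟨Z₀, h₀⟩ := exists_eq_sq_mul h
  induction m with
  | zero => exact ⟨1, by simp⟩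
  | succ m ih =>
    obtain ⟨Z, hZ⟩ := ih
    refine ⟨Z₀ * Z, ?_⟩
    calc B = B ^ m * B * Z := by rw [← pow_succ]; exact hZ
      _ = B ^ m * (B ^ 2 * Z₀) * Z := by rw [← h₀]
      _ = B ^ (m + 1 + 1) * (Z₀ * Z) := by simp only [pow_succ, pow_zero, one_mul, mul_assoc]

theorem exists_pow_eq_add {n : ℕ} {B C : Matrix (Fin n) (Fin n) ℂ} (h : C * B = 0) (m : ℕ) :
    ∃ W, (B + C) ^ m = B * W + C ^ m := by
  induction m with
  | zero => exact ⟨0, by simp⟩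
  | succ m ih =>
    obtain ⟨W, hW⟩ := ih
    refine ⟨B * W + C ^ m, ?_⟩
    rw [pow_succ', hW, add_mul, mul_add C, ← mul_assoc C B, h, zero_mul, zero_add, ← pow_succ']

theorem add_pow_mul_left {n : ℕ} {B C : Matrix (Fin n) (Fin n) ℂ} (h : C * B = 0) (m : ℕ) :
    (B + C) ^ m * B = B ^ (m + 1) := by
  induction m with
  | zero => simp
  | succ m ih =>
    rw [pow_succ', mul_assoc, ih, add_mul, ← pow_succ', pow_succ' B m, ← mul_assoc C, h,
      zero_mul, add_zero]

/-- In the m-core-EP decomposition, `Â₁ = A^k M A` and `Â₂ = A - A^k M A`, where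
`M` is the m-core inverse of `A^k`. -/
theorem mCoreEPDecomp_eq_pow_mcore {n k : ℕ}
    (A A₁ A₂ M : Matrix (Fin n) (Fin n) ℂ) (hk : IsInd A k)
    (hrk : (A ^ k).rank = (madj (A ^ k) * A ^ k).rank)
    (hdec : IsMCoreEPDecomp A A₁ A₂ k)
    (hM : IsMCore (A ^ k) M) :
    A₁ = A ^ k * M * A ∧ A₂ = A - A ^ k * M * A := by
  obtain ⟨hA, hr, -, hnil, horth, h21⟩ := hdec
  obtain ⟨hBYB, -, hself⟩ := hM
  have h1 : A ^ k * M * A₁ = A₁ := by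
    obtain ⟨Z, hZ⟩ := exists_eq_pow_mul hr k
    rw [← add_pow_mul_left h21 k, ← hA] at hZ
    calc A ^ k * M * A₁ = A ^ k * M * (A ^ k * A₁ * Z) := by rw [← hZ]
      _ = A ^ k * M * A ^ k * A₁ * Z := by simp only [mul_assoc]
      _ = A₁ := by rw [hBYB, ← hZ]
  have h2 : A ^ k * M * A₂ = 0 := by
    obtain ⟨W, hW⟩ := exists_pow_eq_add h21 k
    rw [← hA, hnil, add_zero] at hW
    rw [← hself, hW, madj_mul, madj_mul, mul_assoc, mul_assoc, horth, mul_zero, mul_zero]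
  have h3 : A ^ k * M * A = A₁ := by
    conv_lhs => rw [show A ^ k * M * A = A ^ k * M * (A₁ + A₂) by rw [← hA]]
    rw [mul_add, h1, h2, add_zero]
  refine ⟨h3.symm, ?_⟩
  rw [h3]
  exact eq_sub_of_add_eq' hA.symm
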